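/- Let n and m be finite types and let Φ : Matrix n n ℂ →ₗ[ℂ] Matrix n n ℂ be trace-preserving and completely positive. Then for every Hermitian Δ ∈ Matrix (m × n) (m × n) ℂ, one has ‖(id_m ⊗ Φ)(Δ)‖₁ ≤ ‖Δ‖₁, i.e., the trace norm of Hermitian matrices is contractive under id ⊗ Φ. -/

import Mathlib

open Matrix
open scoped ComplexOrder

/-- The positive semidefinite square root of a positive semidefinite matrix
(the definition that Mathlib had under this name). -/
noncomputable def Matrix.PosSemidef.sqrt {n 𝕜 : Type*} [Fintype n] [RCLike 𝕜] [DecidableEq n]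
    {A : Matrix n n 𝕜} (hA : A.PosSemidef) : Matrix n n 𝕜 :=
  hA.1.eigenvectorUnitary.1 * diagonal ((↑) ∘ Real.sqrt ∘ hA.1.eigenvalues) *
    (star hA.1.eigenvectorUnitary : Matrix n n 𝕜)

/-- The trace norm of a matrix: the trace of the positive semidefinite square root of `AᴴA`. -/
noncomputable def traceNorm {n : Type*} [Fintype n] [DecidableEq n] (A : Matrix n n ℂ) : ℝ :=
  ((Matrix.posSemidef_conjTranspose_mul_self A).sqrt.trace).re

/-- The blockwise application `id_m ⊗ Φ` of a linear map `Φ` on `Matrix n n ℂ`: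
`((id_m ⊗ Φ)(Δ))((i,k),(j,l)) = (Φ(Δ_{i,j}))(k,l)` where `Δ_{i,j}(k,l) = Δ((i,k),(j,l))`
is the `(i,j)` block of `Δ`. -/
def idTensor (m : Type*) [Fintype m] {n : Type*} [Fintype n]
    (Φ : Matrix n n ℂ →ₗ[ℂ] Matrix n n ℂ) :
    Matrix (m × n) (m × n) ℂ →ₗ[ℂ] Matrix (m × n) (m × n) ℂ where
  toFun Δ := Matrix.of fun p q =>
    (Φ (Matrix.of fun k l => Δ (p.1, k) (q.1, l))) p.2 q.2
  map_add' Δ Δ' := by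
    have h : ∀ i j : m, (Matrix.of fun k l => (Δ + Δ') (i, k) (j, l))
        = (Matrix.of fun k l => Δ (i, k) (j, l))
          + (Matrix.of fun k l => Δ' (i, k) (j, l)) := by
      intro i j; ext k l; simp [Matrix.add_apply]
    ext ⟨i, k⟩ ⟨j, l⟩
    simp only [Matrix.of_apply, Matrix.add_apply]
    rw [← Matrix.add_apply, ← map_add, ← h]
    rfl
  map_smul' c Δ := by
    have h : ∀ i j : m, (Matrix.of fun k l => (c • Δ) (i, k) (j, l))
        = c • (Matrix.of fun k l => Δ (i, k) (j, l)) := by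
      intro i j; ext k l; simp [Matrix.smul_apply]
    ext ⟨i, k⟩ ⟨j, l⟩
    simp only [Matrix.of_apply, Matrix.smul_apply, RingHom.id_apply]
    rw [← Matrix.smul_apply, ← LinearMap.map_smul, ← h]
    rfl

/-- Complete positivity: `id_m ⊗ Φ` maps positive semidefinite matrices to positive
semidefinite matrices for every finite type `m`. -/
def IsCompletelyPositive {n : Type*} [Fintype n]
    (Φ : Matrix n n ℂ →ₗ[ℂ] Matrix n n ℂ) : Prop :=
  ∀ (m : Type) (_ : Fintype m) (Δ : Matrix (m × n) (m × n) ℂ),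
    Δ.PosSemidef → (idTensor m Φ Δ).PosSemidef

/-- Trace preservation. -/
def IsTracePreserving {n : Type*} [Fintype n]
    (Φ : Matrix n n ℂ →ₗ[ℂ] Matrix n n ℂ) : Prop :=
  ∀ X : Matrix n n ℂ, (Φ X).trace = X.trace

open scoped MatrixOrder

theorem Matrix.PosSemidef.sqrt_eq_cfcSqrt {n 𝕜 : Type*} [Fintype n] [RCLike 𝕜] [DecidableEq n]
    {A : Matrix n n 𝕜} (hA : A.PosSemidef) : hA.sqrt = CFC.sqrt A := by
  rw [CFC.sqrt_eq_real_sqrt A hA.nonneg, cfcₙ_eq_cfc, hA.1.cfc_eq]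
  rfl

theorem traceNorm_eq_trace_abs {n : Type*} [Fintype n] [DecidableEq n] (A : Matrix n n ℂ) :
    traceNorm A = (CFC.abs A).trace.re := by
  rw [traceNorm, Matrix.PosSemidef.sqrt_eq_cfcSqrt]
  rfl

theorem Matrix.IsHermitian.trace_abs {n : Type*} [Fintype n] [DecidableEq n] {A : Matrix n n ℂ}
    (hA : A.IsHermitian) : (CFC.abs A).trace = ∑ i, ((|hA.eigenvalues i| : ℝ) : ℂ) := by
  rw [CFC.abs_eq_cfcₙ_norm A hA, cfcₙ_eq_cfc, hA.cfc_eq, IsHermitian.cfc,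
    Unitary.conjStarAlgAut_apply, trace_mul_comm, ← mul_assoc, Unitary.coe_star_mul_self, one_mul,
    trace_diagonal]
  rfl

/-- The trace norm of a Hermitian matrix `A` is at most the trace of any `P` with `-P ≤ A ≤ P`. -/
theorem Matrix.IsHermitian.traceNorm_le_trace {n : Type*} [Fintype n] [DecidableEq n]
    {A P : Matrix n n ℂ} (hA : A.IsHermitian) (hsub : (P - A).PosSemidef)
    (hadd : (P + A).PosSemidef) : traceNorm A ≤ P.trace.re := by
  let U : Matrix n n ℂ := hA.eigenvectorUnitary
  have hdiag : Uᴴ * A * U = diagonal (RCLike.ofReal ∘ hA.eigenvalues) := by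
    rw [← hA.conjStarAlgAut_star_eigenvectorUnitary, Unitary.conjStarAlgAut_apply]
    simp [U, star_eq_conjTranspose]
  have htrace : (Uᴴ * P * U).trace = P.trace := by
    have hU : U * Uᴴ = 1 := Unitary.coe_mul_star_self hA.eigenvectorUnitary
    rw [trace_mul_comm, ← mul_assoc, hU, one_mul]
  have hbound (i : n) : |hA.eigenvalues i| ≤ ((Uᴴ * P * U) i i).re := by
    have hs := (hsub.conjTranspose_mul_mul_same U).diag_nonneg (i := i)
    have ha := (hadd.conjTranspose_mul_mul_same U).diag_nonneg (i := i)
    rw [mul_sub, sub_mul, hdiag] at hs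
    rw [mul_add, add_mul, hdiag] at ha
    have hs' := (Complex.le_def.mp hs).1
    have ha' := (Complex.le_def.mp ha).1
    simp at hs' ha'
    exact abs_le.mpr ⟨by linarith, by linarith⟩
  rw [traceNorm_eq_trace_abs, hA.trace_abs, ← htrace, trace, Complex.re_sum, Complex.re_sum]
  exact Finset.sum_le_sum fun i _ => hbound i

theorem IsCompletelyPositive.posSemidef_idTensor {n m : Type*} [Fintype n] [Fintype m]
    {Φ : Matrix n n ℂ →ₗ[ℂ] Matrix n n ℂ} (hCP : IsCompletelyPositive Φ)
    {Δ : Matrix (m × n) (m × n) ℂ} (hΔ : Δ.PosSemidef) : (idTensor m Φ Δ).PosSemidef := by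
  let e : m × n ≃ Fin (Fintype.card m) × n := (Fintype.equivFin m).prodCongr (Equiv.refl n)
  have h := (hCP _ inferInstance _ (hΔ.submatrix e.symm)).submatrix e
  convert h using 1
  ext p q
  simp [idTensor, e]

theorem IsTracePreserving.trace_idTensor {n m : Type*} [Fintype n] [Fintype m]
    {Φ : Matrix n n ℂ →ₗ[ℂ] Matrix n n ℂ} (hTP : IsTracePreserving Φ)
    (Δ : Matrix (m × n) (m × n) ℂ) : (idTensor m Φ Δ).trace = Δ.trace := by
  simp only [trace, Fintype.sum_prod_type]
  exact Finset.sum_congr rfl fun i _ => hTP (Matrix.of fun k l => Δ (i, k) (i, l))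

/-- The trace norm of Hermitian matrices is contractive under `id ⊗ Φ` for any completely
positive trace-preserving map `Φ`. -/
theorem traceNorm_idTensor_le {n m : Type*} [Fintype n] [DecidableEq n]
    [Fintype m] [DecidableEq m]
    (Φ : Matrix n n ℂ →ₗ[ℂ] Matrix n n ℂ)
    (hTP : IsTracePreserving Φ) (hCP : IsCompletelyPositive Φ)
    (Δ : Matrix (m × n) (m × n) ℂ) (hΔ : Δ.IsHermitian) :
    traceNorm (idTensor m Φ Δ) ≤ traceNorm Δ := by
  have hsub : (CFC.abs Δ - Δ).PosSemidef := by
    rw [CFC.abs_sub_self Δ hΔ]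
    exact (nsmul_nonneg (CFC.negPart_nonneg Δ) 2).posSemidef
  have hadd : (CFC.abs Δ + Δ).PosSemidef := by
    rw [CFC.abs_add_self Δ hΔ]
    exact (nsmul_nonneg (CFC.posPart_nonneg Δ) 2).posSemidef
  have hsub' := hCP.posSemidef_idTensor hsub
  have hadd' := hCP.posSemidef_idTensor hadd
  rw [map_sub] at hsub'
  rw [map_add] at hadd'
  have hherm : (idTensor m Φ Δ).IsHermitian := by
    simpa using hadd'.1.sub (hCP.posSemidef_idTensor (CFC.abs_nonneg Δ).posSemidef).1
  rw [traceNorm_eq_trace_abs Δ, ← hTP.trace_idTensor]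
  exact hherm.traceNorm_le_trace hsub' hadd'
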